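/- Let A ∈ SL₂(ℤ) have trace greater than 2, let λ > 1 be its larger eigenvalue, and set p = log λ. Suppose M = [[α, β],[γ, δ]] ∈ SL₂(ℝ) satisfies A·M = M·diag(λ, λ⁻¹). Let ℤ² ⋊_A ℤ be the semidirect product in which m ∈ ℤ acts on ℤ² by v ↦ A^m·v. Then the map sending ((k,l), m) ∈ ℤ² ⋊_A ℤ to the 3×3 matrix [[e^{pm}, δk − βl, 0],[0, 1, 0],[0, −γk + αl, e^{−pm}]] is an injective group homomorphism into GL₃(ℝ) whose image lies in S(p,p); moreover, the image is a discrete subgroup of S(p,p), and it is cocompact: there is a compact subset K of S(p,p) such that every element of S(p,p) is the product of an element of the image with an element of K. -/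

import Mathlib

/-- The matrix `[[e^{pc}, a, 0], [0, 1, 0], [0, b, e^{-qc}]]`. -/
noncomputable def solMat (p q a b c : ℝ) : Matrix (Fin 3) (Fin 3) ℝ :=
  !![Real.exp (p * c), a, 0; 0, 1, 0; 0, b, Real.exp (-q * c)]

/-- The set of matrices constituting the group `S(p,q)`. -/
def solSet (p q : ℝ) : Set (Matrix (Fin 3) (Fin 3) ℝ) :=
  { M | ∃ a b c : ℝ, M = solMat p q a b c }

/-- The action of the group element with parameters `g = (a,b,c)` on `ℝ³`:
`(a,b,c)·(x,y,z) = (e^{pc}x + a, e^{-qc}y + b, c + z)`. -/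
noncomputable def solAct (p q : ℝ) (g u : ℝ × ℝ × ℝ) : ℝ × ℝ × ℝ :=
  (Real.exp (p * g.2.2) * u.1 + g.1, Real.exp (-q * g.2.2) * u.2.1 + g.2.1, g.2.2 + u.2.2)

open Matrix

theorem solMat_mul (p q a b c a' b' c' : ℝ) :
    solMat p q a b c * solMat p q a' b' c' =
      solMat p q (a + Real.exp (p * c) * a') (b + Real.exp (-q * c) * b') (c + c') := by
  ext i j
  fin_cases i <;> fin_cases j <;>
    simp [solMat, Matrix.mul_apply, Fin.sum_univ_three, mul_add, Real.exp_add, add_comm]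

theorem continuous_solMat {X : Type*} [TopologicalSpace X] (p q : ℝ) {a b c : X → ℝ}
    (ha : Continuous a) (hb : Continuous b) (hc : Continuous c) :
    Continuous fun x => solMat p q (a x) (b x) (c x) := by
  refine continuous_matrix fun i j => ?_
  fin_cases i <;> fin_cases j <;> simp [solMat] <;> fun_prop

/-- If the relation `ℓ (A v) = μ ℓ v` holds for a function `ℓ` on `ℤⁿ`,
then `ℓ (A ^ m v) = μ ^ m ℓ v` for every integer `m`. -/
theorem apply_zpow_mulVec {n K : Type*} [Fintype n] [DecidableEq n] [Field K]
    (A : SpecialLinearGroup n ℤ) {μ : K} (hμ : μ ≠ 0) (ℓ : (n → ℤ) → K)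
    (h : ∀ v, ℓ ((A : Matrix n n ℤ) *ᵥ v) = μ * ℓ v) (m : ℤ) (v : n → ℤ) :
    ℓ (((A ^ m : SpecialLinearGroup n ℤ) : Matrix n n ℤ) *ᵥ v) = μ ^ m * ℓ v := by
  have step (k : ℤ) : ℓ (((A ^ (k + 1) : SpecialLinearGroup n ℤ) : Matrix n n ℤ) *ᵥ v) =
      μ * ℓ (((A ^ k : SpecialLinearGroup n ℤ) : Matrix n n ℤ) *ᵥ v) := by
    have hk : ((A ^ (k + 1) : SpecialLinearGroup n ℤ) : Matrix n n ℤ) =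
        (A : Matrix n n ℤ) * ((A ^ k : SpecialLinearGroup n ℤ) : Matrix n n ℤ) := by
      rw [add_comm, _root_.zpow_one_add]
      rfl
    rw [hk, ← mulVec_mulVec, h]
  induction m with
  | zero => simp
  | succ k ih => rw [step, ih, zpow_add_one₀ hμ]; ring
  | pred k ih =>
    have := step (-k - 1)
    rw [sub_add_cancel, ih] at this
    rw [zpow_sub_one₀ hμ]
    field_simp
    linear_combination -this

theorem stmt17 (A : Matrix.SpecialLinearGroup (Fin 2) ℤ)
    (htr : 2 < Matrix.trace (A : Matrix (Fin 2) (Fin 2) ℤ))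
    (lam : ℝ) (hlam : 1 < lam)
    (hev : lam ^ 2 - (Int.cast (Matrix.trace (A : Matrix (Fin 2) (Fin 2) ℤ)) : ℝ) * lam + 1 = 0)
    (M : Matrix (Fin 2) (Fin 2) ℝ) (hM : M.det = 1)
    (hdiag : ((A : Matrix (Fin 2) (Fin 2) ℤ).map (Int.cast : ℤ → ℝ)) * M
        = M * Matrix.diagonal ![lam, lam⁻¹]) :
    let p : ℝ := Real.log lam
    let θ : (Fin 2 → ℤ) × ℤ → Matrix (Fin 3) (Fin 3) ℝ := fun g =>
      solMat p p (M 1 1 * (g.1 0 : ℝ) - M 0 1 * (g.1 1 : ℝ))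
        (-(M 1 0) * (g.1 0 : ℝ) + M 0 0 * (g.1 1 : ℝ)) (g.2 : ℝ)
    (∀ (v v' : Fin 2 → ℤ) (m m' : ℤ),
        θ (v + ((A ^ m : Matrix.SpecialLinearGroup (Fin 2) ℤ) : Matrix (Fin 2) (Fin 2) ℤ).mulVec v',
            m + m')
          = θ (v, m) * θ (v', m')) ∧
    Function.Injective θ ∧
    (∀ g : (Fin 2 → ℤ) × ℤ, θ g ∈ solSet p p) ∧
    DiscreteTopology (Set.range θ) ∧
    (∃ K : Set (Matrix (Fin 3) (Fin 3) ℝ), IsCompact K ∧ K ⊆ solSet p p ∧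
      ∀ g ∈ solSet p p, ∃ h ∈ Set.range θ, ∃ k ∈ K, g = h * k) := by
  intro p θ
  have hlam0 : 0 < lam := by linarith
  have hp : 0 < p := Real.log_pos hlam
  have hexp (m : ℤ) : Real.exp (p * m) = lam ^ m := by
    rw [Real.exp_mul, Real.rpow_intCast, Real.exp_log hlam0]
  have hexp' (m : ℤ) : Real.exp (-p * m) = lam⁻¹ ^ m := by
    rw [Real.exp_mul, Real.rpow_intCast, Real.exp_neg, Real.exp_log hlam0]
  have hdet : M 0 0 * M 1 1 - M 0 1 * M 1 0 = 1 := by rw [← hM, det_fin_two]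
  have h00 := congrFun (congrFun hdiag 0) 0
  have h01 := congrFun (congrFun hdiag 0) 1
  have h10 := congrFun (congrFun hdiag 1) 0
  have h11 := congrFun (congrFun hdiag 1) 1
  simp [Matrix.mul_apply, Fin.sum_univ_two, Matrix.diagonal] at h00 h01 h10 h11
  have hx := apply_zpow_mulVec A hlam0.ne'
    (fun v => M 1 1 * (v 0 : ℝ) - M 0 1 * (v 1 : ℝ)) (by
      intro v
      simp [mulVec, dotProduct, Fin.sum_univ_two]
      linear_combination (M 1 1 * v 0 - M 0 1 * v 1) * (M 1 1 * h00 - M 0 1 * h10) +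
        (-M 1 0 * v 0 + M 0 0 * v 1) * (M 1 1 * h01 - M 0 1 * h11) -
        (M 1 1 * (A 0 0 * v 0 + A 0 1 * v 1) - M 0 1 * (A 1 0 * v 0 + A 1 1 * v 1) : ℝ) * hdet +
        lam * (M 1 1 * v 0 - M 0 1 * v 1) * hdet)
  have hy := apply_zpow_mulVec A (inv_ne_zero hlam0.ne')
    (fun v => -(M 1 0) * (v 0 : ℝ) + M 0 0 * (v 1 : ℝ)) (by
      intro v
      simp [mulVec, dotProduct, Fin.sum_univ_two]
      linear_combination (M 1 1 * v 0 - M 0 1 * v 1) * (-M 1 0 * h00 + M 0 0 * h10) +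
        (-M 1 0 * v 0 + M 0 0 * v 1) * (-M 1 0 * h01 + M 0 0 * h11) -
        (-M 1 0 * (A 0 0 * v 0 + A 0 1 * v 1) + M 0 0 * (A 1 0 * v 0 + A 1 1 * v 1) : ℝ) * hdet +
        lam⁻¹ * (-M 1 0 * v 0 + M 0 0 * v 1) * hdet)
  have hmul : ∀ (v v' : Fin 2 → ℤ) (m m' : ℤ),
      θ (v + ((A ^ m : SpecialLinearGroup (Fin 2) ℤ) : Matrix (Fin 2) (Fin 2) ℤ) *ᵥ v', m + m') =
        θ (v, m) * θ (v', m') := by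
    intro v v' m m'
    have hxv := hx m v'
    have hyv := hy m v'
    simp only [θ, solMat_mul, hexp, hexp', ← hxv, ← hyv]
    congr 1 <;> simp <;> ring
  have hc0 (g : (Fin 2 → ℤ) × ℤ) : M 0 0 * θ g 0 1 + M 0 1 * θ g 2 1 = g.1 0 := by
    simp only [θ, solMat, of_apply, cons_val]
    linear_combination (g.1 0 : ℝ) * hdet
  have hc1 (g : (Fin 2 → ℤ) × ℤ) : M 1 0 * θ g 0 1 + M 1 1 * θ g 2 1 = g.1 1 := by
    simp only [θ, solMat, of_apply, cons_val]
    linear_combination (g.1 1 : ℝ) * hdet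
  have hpos (g : (Fin 2 → ℤ) × ℤ) : θ g 0 0 ≠ 0 := by
    simp [θ, solMat]
  have hc2 (g : (Fin 2 → ℤ) × ℤ) : Real.log (θ g 0 0) / p = g.2 := by
    simp [θ, solMat, hp.ne']
  have hinj : Function.Injective θ := by
    intro g g' h
    refine Prod.ext (funext fun i => ?_) ?_
    · fin_cases i
      · exact_mod_cast (hc0 g).symm.trans (h ▸ hc0 g')
      · exact_mod_cast (hc1 g).symm.trans (h ▸ hc1 g')
    · exact_mod_cast (hc2 g).symm.trans (h ▸ hc2 g')
  refine ⟨hmul, hinj, fun g => ⟨_, _, _, rfl⟩, ?_, ?_⟩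
  · set e := (Equiv.ofInjective θ hinj).symm
    have he (N : Set.range θ) : θ (e N) = N := Equiv.apply_ofInjective_symm hinj N
    refine DiscreteTopology.of_continuous_injective (f := e) ?_ e.injective
    refine .prodMk (f := fun N => (e N).1) (g := fun N => (e N).2) (continuous_pi fun i => ?_) ?_
    · rw [Int.isClosedEmbedding_coe_real.isEmbedding.continuous_iff]
      fin_cases i
      · simp only [Function.comp_def, Fin.zero_eta, ← hc0, he]
        exact ((continuous_subtype_val.matrix_elem _ _).const_mul _).add
          ((continuous_subtype_val.matrix_elem _ _).const_mul _)
      · simp only [Function.comp_def, Fin.mk_one, ← hc1, he]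
        exact ((continuous_subtype_val.matrix_elem _ _).const_mul _).add
          ((continuous_subtype_val.matrix_elem _ _).const_mul _)
    · rw [Int.isClosedEmbedding_coe_real.isEmbedding.continuous_iff]
      simp only [Function.comp_def, ← hc2, he]
      refine Continuous.div_const (Continuous.log (continuous_subtype_val.matrix_elem _ _) fun N => ?_) p
      rw [← he N]
      exact hpos _
  · let F : ℝ × ℝ × ℝ → Matrix (Fin 3) (Fin 3) ℝ := fun u =>
      solMat p p (M 1 1 * u.1 - M 0 1 * u.2.1) (-(M 1 0) * u.1 + M 0 0 * u.2.1) u.2.2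
    refine ⟨Set.image F (Set.Icc 0 1), isCompact_Icc.image (continuous_solMat p p (by fun_prop)
      (by fun_prop) (by fun_prop)), ?_, ?_⟩
    · rintro _ ⟨u, -, rfl⟩
      exact ⟨_, _, _, rfl⟩
    · rintro _ ⟨a, b, c, rfl⟩
      set m := ⌊c⌋
      have hm : lam ^ m ≠ 0 := zpow_ne_zero _ hlam0.ne'
      set a' := (lam ^ m)⁻¹ * a
      set b' := lam ^ m * b
      set s := M 0 0 * a' + M 0 1 * b' with hs
      set t := M 1 0 * a' + M 1 1 * b' with ht
      have ha : a = lam ^ m * a' := by simp [a', hm]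
      have hb : b = (lam ^ m)⁻¹ * b' := by simp [b', hm]
      refine ⟨_, ⟨(0 + ((A ^ m : SpecialLinearGroup (Fin 2) ℤ) : Matrix (Fin 2) (Fin 2) ℤ) *ᵥ
          ![⌊s⌋, ⌊t⌋], m + 0), rfl⟩, F (Int.fract s, Int.fract t, Int.fract c), ⟨_, ?_, rfl⟩, ?_⟩
      · simp [Prod.le_def, Int.fract_nonneg, (Int.fract_lt_one _).le]
      · rw [hmul]
        simp only [θ, F, solMat_mul, Int.cast_zero, add_zero, hexp, hexp']
        congr 1
        · simp only [← Int.self_sub_floor, Pi.zero_apply, Int.cast_zero, cons_val]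
          linear_combination ha - lam ^ m * (a' * hdet + M 1 1 * hs - M 0 1 * ht)
        · simp only [← Int.self_sub_floor, Pi.zero_apply, Int.cast_zero, cons_val, _root_.inv_zpow]
          linear_combination hb - (lam ^ m)⁻¹ * (b' * hdet - M 1 0 * hs + M 0 0 * ht)
        · simp [m]
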